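/- Under the stochastic wide-range Hedge setup, with probability at least 1 − p† the following holds simultaneously for all b ∈ B^e and all actions a ∈ 𝒜 (equivalently all constant maps ψ ∈ Ψ^e, for which ⟨ψ∘p, ℓ̃⟩ = ℓ̃(a)): ∑_{t=1}^T M^t_b·(⟨p^t, ℓ̃^t_b⟩ − ℓ̃^t_b(a)) ≤ η·L̄·∑_{t=1}^T M^t_b·⟨p^t, ℓ̃^t_b⟩ + log((|B^s| + |B^e|)·A / p†)/(η·w_b). -/

import Mathlib

/-! The potential `Φ_t = ∑_{(b,ψ)∈ℐ} W t (b,ψ)` has non-increasing expectation, so Markov's inequality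
at time `T` controls every single weight.

For `x, y ∈ [0, L̄]` the chord bounds `exp (-η y) ≤ 1 - c y` and `exp (η exp (-η L̄) x) ≤ 1 + c x`, with
`c = (1 - exp (-η L̄)) / L̄`, multiply to
`exp (η (exp (-η L̄) x - y)) ≤ 1 + c (x - y)` (`hedge_step`). With `x = S^t_b ⟨p^t, ℓ̃^t_b⟩` and
`y = S^t_b ⟨ψ∘p^t, ℓ̃^t_b⟩` this bounds `Φ_t` by `Φ_{t-1}` plus a term linear in the `ℓ̃^t_b`. Since the
other factors of that term are known at time `t-1`, each `ℓ̃^t_b` may be replaced in expectation by the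
common conditional mean `ℓ^t` (`integral_mul_of_condExp`), after which the stationarity equation makes
the term vanish. As `Φ_0 = (|B^s| + |B^e|) A^(A+1)`, with probability at least `1 - p†` each weight
`W T (b, const a)`, `b ∈ B^e`, is below `(|B^s| + |B^e|) A^(A+1) / p†`; taking logarithms and using
`1 - exp (-η L̄) ≤ η L̄` gives the claim.

When `M^t_b = 0` the vector `ℓ̃^t_b` need not be integrable, so the argument handles the product
`S^t_b ℓ̃^t_b`, which is always bounded. -/

open Finset MeasureTheory

/-- Pushforward of a vector `p` on `Fin A` under a map `ψ : Fin A → Fin A`: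
`(ψ∘p)(a) = ∑_{a' : ψ(a') = a} p(a')`. -/
def pushf {A : ℕ} (ψ : Fin A → Fin A) (p : Fin A → ℝ) : Fin A → ℝ :=
  fun a => ∑ a' ∈ Finset.univ.filter (fun a' => ψ a' = a), p a'

/-- Standard inner product on `ℝ^A`. -/
def ip {A : ℕ} (p ℓ : Fin A → ℝ) : ℝ := ∑ a, p a * ℓ a

/-- The set `Ψ^e` of external (constant) modifications on `Fin A`. -/
def PsiE (A : ℕ) : Finset (Fin A → Fin A) :=
  Finset.univ.image fun a => Function.const (Fin A) a

lemma exp_mul_le_chord {θ z : ℝ} (h0 : 0 ≤ θ) (h1 : θ ≤ 1) :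
    Real.exp (θ * z) ≤ 1 - θ + θ * Real.exp z := by
  have h := convexOn_exp.2 (Set.mem_univ (0 : ℝ)) (Set.mem_univ z) (sub_nonneg.2 h1) h0 (by ring)
  simpa using h

/-- The one-step inequality that linearises a weight update. -/
lemma hedge_step {L η x y : ℝ} (hL : 0 < L) (hη : 0 < η) (hx0 : 0 ≤ x) (hxL : x ≤ L)
    (hy0 : 0 ≤ y) (hyL : y ≤ L) :
    Real.exp (η * (Real.exp (-η * L) * x - y))
      ≤ 1 + (1 - Real.exp (-η * L)) / L * (x - y) := by
  set q := Real.exp (-η * L) with hq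
  have hq0 : 0 < q := Real.exp_pos _
  have hq1 : q ≤ 1 := Real.exp_le_one_iff.2 (by nlinarith [mul_pos hη hL])
  set c := (1 - q) / L with hc
  have hc0 : 0 ≤ c := div_nonneg (by linarith) hL.le
  have hcL : c * L = 1 - q := by rw [hc]; field_simp
  have hy : Real.exp (-(η * y)) ≤ 1 - c * y := by
    have h := exp_mul_le_chord (θ := y / L) (z := -η * L) (by positivity)
      ((div_le_one hL).2 hyL)
    rw [← hq] at h
    have e1 : y / L * (-η * L) = -(η * y) := by field_simp
    have e2 : 1 - y / L + y / L * q = 1 - c * y := by rw [hc]; field_simp; ring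
    rwa [e1, e2] at h
  have hx : Real.exp (η * q * x) ≤ 1 + c * x := by
    -- The endpoint value comes from the chord of `exp` on `[0, η L]` at the point `q · (η L)`.
    have hend : Real.exp (q * (η * L)) ≤ 2 - q := by
      have h := exp_mul_le_chord (z := η * L) hq0.le hq1
      have e : q * Real.exp (η * L) = 1 := by
        rw [hq, ← Real.exp_add]; simp
      linarith
    have h := exp_mul_le_chord (θ := x / L) (z := q * (η * L)) (by positivity)
      ((div_le_one hL).2 hxL)
    have e1 : x / L * (q * (η * L)) = η * q * x := by field_simp
    rw [e1] at h
    have h2 : x / L * Real.exp (q * (η * L)) ≤ x / L * (2 - q) :=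
      mul_le_mul_of_nonneg_left hend (by positivity)
    have e2 : 1 - x / L + x / L * (2 - q) = 1 + c * x := by rw [hc]; field_simp; ring
    linarith
  have hsplit : Real.exp (η * (q * x - y)) = Real.exp (η * q * x) * Real.exp (-(η * y)) := by
    rw [← Real.exp_add]; ring_nf
  rw [hsplit]
  calc _ ≤ (1 + c * x) * (1 - c * y) :=
        mul_le_mul hx hy (Real.exp_pos _).le (by positivity)
    _ ≤ _ := by nlinarith [mul_nonneg (mul_nonneg hc0 hx0) (mul_nonneg hc0 hy0)]

lemma pushf_nonneg {A : ℕ} (ψ : Fin A → Fin A) {p : Fin A → ℝ} (hp : ∀ a, 0 ≤ p a) (a : Fin A) :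
    0 ≤ pushf ψ p a := Finset.sum_nonneg fun i _ => hp i

lemma sum_pushf {A : ℕ} (ψ : Fin A → Fin A) (p : Fin A → ℝ) :
    ∑ a, pushf ψ p a = ∑ a, p a :=
  Finset.sum_fiberwise Finset.univ ψ p

lemma ip_pushf_const {A : ℕ} (a : Fin A) {p : Fin A → ℝ} (hp : ∑ a, p a = 1) (l : Fin A → ℝ) :
    ip (pushf (Function.const (Fin A) a) p) l = l a := by
  unfold ip
  rw [Finset.sum_eq_single a]
  · simp [pushf, hp]
  · intro b _ hb
    simp [pushf, hb.symm]
  · simp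

lemma ip_nonneg {A : ℕ} {p l : Fin A → ℝ} (hp : ∀ a, 0 ≤ p a) (hl : ∀ a, 0 ≤ l a) :
    0 ≤ ip p l := Finset.sum_nonneg fun a _ => mul_nonneg (hp a) (hl a)

lemma mul_ip_le {A : ℕ} {p l : Fin A → ℝ} {S L : ℝ} (hp : ∀ a, 0 ≤ p a) (hp1 : ∑ a, p a = 1)
    (hl : ∀ a, S * l a ≤ L) : S * ip p l ≤ L := by
  unfold ip
  calc S * ∑ a, p a * l a = ∑ a, p a * (S * l a) := by
        rw [Finset.mul_sum]; exact Finset.sum_congr rfl fun a _ => by ring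
    _ ≤ ∑ a, p a * L := Finset.sum_le_sum fun a _ => mul_le_mul_of_nonneg_left (hl a) (hp a)
    _ = L := by rw [← Finset.sum_mul, hp1, one_mul]

lemma measurable_pushf {A : ℕ} {Ω : Type} {m : MeasurableSpace Ω} (ψ : Fin A → Fin A)
    {p : Ω → Fin A → ℝ} (hp : ∀ a, Measurable[m] fun ω => p ω a) (a : Fin A) :
    Measurable[m] fun ω => pushf ψ (p ω) a :=
  Finset.measurable_fun_sum _ fun i _ => hp i

lemma measurable_ip {A : ℕ} {Ω : Type} {m : MeasurableSpace Ω}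
    {p l : Ω → Fin A → ℝ} (hp : ∀ a, Measurable[m] fun ω => p ω a)
    (hl : ∀ a, Measurable[m] fun ω => l ω a) :
    Measurable[m] fun ω => ip (p ω) (l ω) :=
  Finset.measurable_fun_sum _ fun i _ => (hp i).mul (hl i)

/-- Under the integral, a bounded `f` may be replaced by its conditional expectation `h` given `m`
when multiplied by a bounded `m`-measurable `g`. -/
lemma integral_mul_of_condExp {Ω : Type} {m mΩ : MeasurableSpace Ω} (hm : m ≤ mΩ)
    (μ : Measure Ω) [IsProbabilityMeasure μ] {f g h : Ω → ℝ} {K L : ℝ}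
    (hg : Measurable[m] g) (hgK : ∀ᵐ ω ∂μ, |g ω| ≤ K)
    (hf : Measurable f) (hfL : ∀ᵐ ω ∂μ, |f ω| ≤ L)
    (hfh : μ[f|m] =ᵐ[μ] h) :
    Integrable (fun ω => g ω * f ω) μ ∧ Integrable (fun ω => g ω * h ω) μ ∧
      ∫ ω, g ω * f ω ∂μ = ∫ ω, g ω * h ω ∂μ := by
  have hfi : Integrable f μ := Integrable.of_bound hf.aestronglyMeasurable L hfL
  have hgf : Integrable (fun ω => g ω * f ω) μ :=
    hfi.bdd_mul (hg.mono hm le_rfl).aestronglyMeasurable hgK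
  have hce : μ[(fun ω => g ω * f ω)|m] =ᵐ[μ] fun ω => g ω * h ω := by
    have h1 := condExp_mul_of_stronglyMeasurable_left (μ := μ) hg.stronglyMeasurable hgf hfi
    filter_upwards [h1, hfh] with ω h1 h2
    have h1' : (μ[(fun ω => g ω * f ω)|m]) ω = g ω * (μ[f|m]) ω := h1
    rw [h1', h2]
  refine ⟨hgf, integrable_condExp.congr hce, ?_⟩
  rw [← integral_condExp hm, integral_congr_ae hce]

/-- High-probability wide-range regret bound of stochastic wide-range Hedge (external
part): with probability at least `1 − p†`, simultaneously for all `b ∈ B^e` and all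
actions `a`,
`∑_t M^t_b (⟨p^t, ℓ̃^t_b⟩ − ℓ̃^t_b(a))
  ≤ η·L̄·∑_t M^t_b ⟨p^t, ℓ̃^t_b⟩ + log((|B^s|+|B^e|)·A/p†)/(η·w_b)`. -/
theorem stmt6
    (A : ℕ) (hA : 1 ≤ A)
    (B : Type) [Fintype B] [DecidableEq B]
    (Bs Be : Finset B) (hdisj : Disjoint Bs Be)
    (hBs : Bs.Nonempty) (hBe : Be.Nonempty)
    (ℐ : Finset (B × (Fin A → Fin A)))
    (hℐ : ℐ = Bs ×ˢ (Finset.univ : Finset (Fin A → Fin A)) ∪ Be ×ˢ PsiE A)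
    {Ω : Type} [mΩ : MeasurableSpace Ω] (μ : Measure Ω) [IsProbabilityMeasure μ]
    (𝔉 : Filtration ℕ mΩ)
    (T : ℕ) (hT : 1 ≤ T)
    (M : ℕ → B → ℝ) (hM : ∀ t ∈ Finset.Icc 1 T, ∀ b ∈ Bs ∪ Be, 0 ≤ M t b)
    (wb : B → ℝ) (hwb : ∀ b ∈ Bs ∪ Be, 0 < wb b)
    (Lbar η pdag : ℝ) (hL : 0 < Lbar) (hη : 0 < η) (hpdag : 0 < pdag ∧ pdag < 1)
    (ℓt : ℕ → B → Ω → Fin A → ℝ)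
    (hℓtmeas : ∀ t ∈ Finset.Icc 1 T, ∀ b ∈ Bs ∪ Be, ∀ a,
      Measurable[𝔉 t] fun ω => ℓt t b ω a)
    (hℓtnonneg : ∀ t ∈ Finset.Icc 1 T, ∀ b ∈ Bs ∪ Be, ∀ ω, ∀ a, 0 ≤ ℓt t b ω a)
    (hbd : ∀ t ∈ Finset.Icc 1 T, ∀ b ∈ Bs ∪ Be, ∀ a : Fin A,
      ∀ᵐ ω ∂μ, (wb b * M t b) * ℓt t b ω a ≤ Lbar)
    (ℓ : ℕ → Ω → Fin A → ℝ)
    (hℓmeas : ∀ t ∈ Finset.Icc 1 T, ∀ a, Measurable[𝔉 (t - 1)] fun ω => ℓ t ω a)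
    (hcond : ∀ t ∈ Finset.Icc 1 T, ∀ b ∈ Bs ∪ Be, ∀ a : Fin A,
      μ[(fun ω => ℓt t b ω a)|𝔉 (t - 1)] =ᵐ[μ] fun ω => ℓ t ω a)
    (p : ℕ → Ω → Fin A → ℝ)
    (hpmeas : ∀ t ∈ Finset.Icc 1 T, ∀ a, Measurable[𝔉 (t - 1)] fun ω => p t ω a)
    (hpprob : ∀ t ∈ Finset.Icc 1 T, ∀ ω, (∀ a, 0 ≤ p t ω a) ∧ ∑ a, p t ω a = 1)
    (W : ℕ → Ω → B × (Fin A → Fin A) → ℝ)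
    (hW : ∀ t ω, ∀ bψ : B × (Fin A → Fin A), W t ω bψ =
      (if bψ.1 ∈ Be then (A : ℝ) ^ (A : ℕ) else (A : ℝ)) *
        Real.exp (η * ∑ s ∈ Finset.Icc 1 t,
          (Real.exp (-η * Lbar) * (wb bψ.1 * M s bψ.1) * ip (p s ω) (ℓt s bψ.1 ω)
            - (wb bψ.1 * M s bψ.1) * ip (pushf bψ.2 (p s ω)) (ℓt s bψ.1 ω))))
    (hstat : ∀ t ∈ Finset.Icc 1 T, ∀ᵐ ω ∂μ, ∀ a : Fin A,
      ∑ bψ ∈ ℐ, W (t - 1) ω bψ * (wb bψ.1 * M t bψ.1) * p t ω a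
        = ∑ bψ ∈ ℐ, W (t - 1) ω bψ * (wb bψ.1 * M t bψ.1) * pushf bψ.2 (p t ω) a) :
    ENNReal.ofReal (1 - pdag) ≤
      μ {ω | ∀ b ∈ Be, ∀ a : Fin A,
        ∑ t ∈ Finset.Icc 1 T,
            M t b * (ip (p t ω) (ℓt t b ω) - ℓt t b ω a)
          ≤ η * Lbar * ∑ t ∈ Finset.Icc 1 T, M t b * ip (p t ω) (ℓt t b ω)
            + Real.log (((Bs.card : ℝ) + (Be.card : ℝ)) * (A : ℝ) / pdag)
              / (η * wb b)} := by
  have hIB : ∀ i ∈ ℐ, i.1 ∈ Bs ∪ Be := by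
    intro i hi
    rw [hℐ] at hi
    simp only [Finset.mem_union, Finset.mem_product] at hi ⊢
    tauto
  have hApos : (0 : ℝ) < A := by exact_mod_cast hA
  have hWpos : ∀ t ω i, 0 < W t ω i := by
    intro t ω i
    rw [hW]
    refine mul_pos ?_ (Real.exp_pos _)
    split_ifs <;> positivity
  have hS : ∀ t ∈ Finset.Icc 1 T, ∀ b ∈ Bs ∪ Be, 0 ≤ wb b * M t b := fun t ht b hb =>
    mul_nonneg (hwb b hb).le (hM t ht b hb)
  have hbd' : ∀ t ∈ Finset.Icc 1 T, ∀ b ∈ Bs ∪ Be,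
      ∀ᵐ ω ∂μ, ∀ a, (wb b * M t b) * ℓt t b ω a ≤ Lbar := fun t ht b hb =>
    ae_all_iff.2 (hbd t ht b hb)
  have hWmeas : ∀ t ≤ T, ∀ i ∈ ℐ, Measurable[𝔉 t] fun ω => W t ω i := by
    intro t ht i hi
    simp_rw [hW]
    refine Measurable.const_mul (Real.measurable_exp.comp (Measurable.const_mul ?_ _)) _
    refine Finset.measurable_fun_sum _ fun s hs => ?_
    have hs' := Finset.mem_Icc.1 hs
    have hsT : s ∈ Finset.Icc 1 T := Finset.mem_Icc.2 ⟨hs'.1, hs'.2.trans ht⟩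
    have hp : ∀ a, Measurable[𝔉 t] fun ω => p s ω a := fun a =>
      (hpmeas s hsT a).mono (𝔉.mono (by omega)) le_rfl
    have hl : ∀ a, Measurable[𝔉 t] fun ω => ℓt s i.1 ω a := fun a =>
      (hℓtmeas s hsT i.1 (hIB i hi) a).mono (𝔉.mono hs'.2) le_rfl
    exact ((measurable_ip hp hl).const_mul _).sub
      ((measurable_ip (measurable_pushf i.2 hp) hl).const_mul _)
  have hWbd : ∀ t ≤ T, ∀ i ∈ ℐ, ∃ K, ∀ᵐ ω ∂μ, |W t ω i| ≤ K := by
    intro t ht i hi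
    refine ⟨(if i.1 ∈ Be then (A : ℝ) ^ (A : ℕ) else (A : ℝ)) *
        Real.exp (η * ∑ s ∈ Finset.Icc 1 t, Real.exp (-η * Lbar) * Lbar), ?_⟩
    have hall : ∀ᵐ ω ∂μ, ∀ s ∈ Finset.Icc 1 T, ∀ a, (wb i.1 * M s i.1) * ℓt s i.1 ω a ≤ Lbar :=
      (Finset.eventually_all _).2 fun s hs => hbd' s hs i.1 (hIB i hi)
    filter_upwards [hall] with ω hω
    rw [abs_of_pos (hWpos t ω i), hW]
    refine mul_le_mul_of_nonneg_left (Real.exp_le_exp.2 (mul_le_mul_of_nonneg_left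
      (Finset.sum_le_sum fun s hs => ?_) hη.le)) (by split_ifs <;> positivity)
    have hs' := Finset.mem_Icc.1 hs
    have hsT : s ∈ Finset.Icc 1 T := Finset.mem_Icc.2 ⟨hs'.1, hs'.2.trans ht⟩
    have hx := mul_ip_le (hpprob s hsT ω).1 (hpprob s hsT ω).2 (hω s hsT)
    have hy := mul_nonneg (hS s hsT i.1 (hIB i hi))
      (ip_nonneg (pushf_nonneg i.2 (hpprob s hsT ω).1) (hℓtnonneg s hsT i.1 (hIB i hi) ω))
    have := mul_le_mul_of_nonneg_left hx (Real.exp_pos (-η * Lbar)).le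
    rw [mul_assoc]
    linarith
  have hWint : ∀ t ≤ T, ∀ i ∈ ℐ, Integrable (fun ω => W t ω i) μ := by
    intro t ht i hi
    obtain ⟨K, hK⟩ := hWbd t ht i hi
    exact Integrable.of_bound ((hWmeas t ht i hi).mono (𝔉.le t) le_rfl).aestronglyMeasurable K hK
  have hΦint : ∀ t ≤ T, Integrable (fun ω => ∑ i ∈ ℐ, W t ω i) μ := fun t ht =>
    integrable_finsetSum _ (hWint t ht)
  have hstep : ∀ t < T, ∫ ω, ∑ i ∈ ℐ, W (t + 1) ω i ∂μ ≤ ∫ ω, ∑ i ∈ ℐ, W t ω i ∂μ := by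
    intro t ht
    have htT : t + 1 ∈ Finset.Icc 1 T := Finset.mem_Icc.2 ⟨by omega, ht⟩
    set c := (1 - Real.exp (-η * Lbar)) / Lbar with hc
    -- The coefficient of `S^{t+1}_b ℓ̃^{t+1}_b(a)`; it is known at time `t`.
    let g : B × (Fin A → Fin A) → Fin A → Ω → ℝ := fun i a ω =>
      W t ω i * (p (t + 1) ω a - pushf i.2 (p (t + 1) ω) a)
    have hle1 : ∀ {q : Fin A → ℝ}, (∀ a, 0 ≤ q a) → ∑ a, q a = 1 → ∀ a, q a ≤ 1 :=
      fun h0 h1 a => h1 ▸ Finset.single_le_sum (fun i _ => h0 i) (Finset.mem_univ a)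
    have hkey : ∀ i ∈ ℐ, ∀ a,
        Integrable (fun ω => g i a ω * ((wb i.1 * M (t + 1) i.1) * ℓt (t + 1) i.1 ω a)) μ ∧
        Integrable (fun ω => g i a ω * ((wb i.1 * M (t + 1) i.1) * ℓ (t + 1) ω a)) μ ∧
        ∫ ω, g i a ω * ((wb i.1 * M (t + 1) i.1) * ℓt (t + 1) i.1 ω a) ∂μ
          = ∫ ω, g i a ω * ((wb i.1 * M (t + 1) i.1) * ℓ (t + 1) ω a) ∂μ := by
      intro i hi a
      have hb := hIB i hi
      obtain ⟨K, hK⟩ := hWbd t ht.le i hi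
      have hp : ∀ a, Measurable[𝔉 t] fun ω => p (t + 1) ω a := hpmeas (t + 1) htT
      refine integral_mul_of_condExp (𝔉.le t) μ (K := K) (L := Lbar) ?_ ?_ ?_ ?_ ?_
      · exact (hWmeas t ht.le i hi).mul ((hp a).sub (measurable_pushf i.2 hp a))
      · filter_upwards [hK] with ω hω
        have hP := hpprob (t + 1) htT ω
        have h1 := hP.1 a
        have h2 := hle1 hP.1 hP.2 a
        have h3 := pushf_nonneg i.2 hP.1 a
        have h4 := hle1 (pushf_nonneg i.2 hP.1) ((sum_pushf i.2 _).trans hP.2) a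
        have h5 : |p (t + 1) ω a - pushf i.2 (p (t + 1) ω) a| ≤ 1 :=
          abs_le.2 ⟨by linarith, by linarith⟩
        calc |g i a ω| = |W t ω i| * |p (t + 1) ω a - pushf i.2 (p (t + 1) ω) a| := abs_mul _ _
          _ ≤ K * 1 := mul_le_mul hω h5 (abs_nonneg _) ((abs_nonneg _).trans hω)
          _ = K := mul_one K
      · exact ((hℓtmeas (t + 1) htT i.1 hb a).mono (𝔉.le _) le_rfl).const_mul _
      · filter_upwards [hbd (t + 1) htT i.1 hb a] with ω hω
        rwa [abs_of_nonneg (mul_nonneg (hS _ htT _ hb) (hℓtnonneg _ htT _ hb ω a))]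
      · -- `condExp_smul` needs no integrability, which matters when `M = 0`.
        have h1 := condExp_smul (μ := μ) (wb i.1 * M (t + 1) i.1)
          (fun ω => ℓt (t + 1) i.1 ω a) (𝔉 t)
        have h2 := hcond (t + 1) htT i.1 hb a
        rw [Nat.add_sub_cancel] at h2
        refine h1.trans ?_
        filter_upwards [h2] with ω h2
        simp [h2]
    have hzero : ∫ ω, ∑ i ∈ ℐ, ∑ a,
        g i a ω * ((wb i.1 * M (t + 1) i.1) * ℓt (t + 1) i.1 ω a) ∂μ = 0 := by
      rw [integral_finsetSum _ fun i hi => integrable_finsetSum _ fun a _ => (hkey i hi a).1]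
      rw [Finset.sum_congr rfl fun i hi =>
        (integral_finsetSum _ fun a _ => (hkey i hi a).1).trans
          ((Finset.sum_congr rfl fun a _ => (hkey i hi a).2.2).trans
            (integral_finsetSum _ fun a _ => (hkey i hi a).2.1).symm)]
      rw [← integral_finsetSum _ fun i hi => integrable_finsetSum _ fun a _ => (hkey i hi a).2.1]
      refine integral_eq_zero_of_ae ?_
      filter_upwards [hstat (t + 1) htT] with ω hω
      rw [Nat.add_sub_cancel] at hω
      rw [Finset.sum_comm]
      refine Finset.sum_eq_zero fun a _ => ?_
      have e : ∑ i ∈ ℐ, g i a ω * ((wb i.1 * M (t + 1) i.1) * ℓ (t + 1) ω a)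
          = (∑ i ∈ ℐ, W t ω i * (wb i.1 * M (t + 1) i.1) * p (t + 1) ω a
            - ∑ i ∈ ℐ, W t ω i * (wb i.1 * M (t + 1) i.1) * pushf i.2 (p (t + 1) ω) a)
              * ℓ (t + 1) ω a := by
        rw [← Finset.sum_sub_distrib, Finset.sum_mul]
        exact Finset.sum_congr rfl fun i _ => by simp only [g]; ring
      rw [e, hω a, sub_self, zero_mul]
    have hlin : Integrable (fun ω => ∑ i ∈ ℐ, ∑ a,
        g i a ω * ((wb i.1 * M (t + 1) i.1) * ℓt (t + 1) i.1 ω a)) μ :=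
      integrable_finsetSum _ fun i hi => integrable_finsetSum _ fun a _ => (hkey i hi a).1
    have hpt : ∀ᵐ ω ∂μ, ∑ i ∈ ℐ, W (t + 1) ω i ≤ ∑ i ∈ ℐ, W t ω i + c * ∑ i ∈ ℐ, ∑ a,
        g i a ω * ((wb i.1 * M (t + 1) i.1) * ℓt (t + 1) i.1 ω a) := by
      have hall : ∀ᵐ ω ∂μ, ∀ i ∈ ℐ, ∀ a,
          (wb i.1 * M (t + 1) i.1) * ℓt (t + 1) i.1 ω a ≤ Lbar :=
        (Finset.eventually_all _).2 fun i hi => hbd' _ htT i.1 (hIB i hi)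
      filter_upwards [hall] with ω hω
      rw [Finset.mul_sum, ← Finset.sum_add_distrib]
      refine Finset.sum_le_sum fun i hi => ?_
      have hb := hIB i hi
      have hP := hpprob (t + 1) htT ω
      have hQ0 := pushf_nonneg i.2 hP.1
      have hQ1 := (sum_pushf i.2 _).trans hP.2
      have hl := hℓtnonneg _ htT _ hb ω
      have hineq := hedge_step hL hη
        (mul_nonneg (hS _ htT _ hb) (ip_nonneg hP.1 hl)) (mul_ip_le hP.1 hP.2 (hω i hi))
        (mul_nonneg (hS _ htT _ hb) (ip_nonneg hQ0 hl)) (mul_ip_le hQ0 hQ1 (hω i hi))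
      have hrec : W (t + 1) ω i = W t ω i * Real.exp (η * (Real.exp (-η * Lbar) *
          (wb i.1 * M (t + 1) i.1 * ip (p (t + 1) ω) (ℓt (t + 1) i.1 ω)) -
          wb i.1 * M (t + 1) i.1 * ip (pushf i.2 (p (t + 1) ω)) (ℓt (t + 1) i.1 ω))) := by
        rw [hW, hW, Finset.sum_Icc_succ_top (by omega), mul_assoc, mul_add, Real.exp_add]
        ring
      have hsum : ∑ a, g i a ω * ((wb i.1 * M (t + 1) i.1) * ℓt (t + 1) i.1 ω a)
          = W t ω i * (wb i.1 * M (t + 1) i.1 * ip (p (t + 1) ω) (ℓt (t + 1) i.1 ω) -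
          wb i.1 * M (t + 1) i.1 * ip (pushf i.2 (p (t + 1) ω)) (ℓt (t + 1) i.1 ω)) := by
        unfold ip
        rw [← mul_sub, ← Finset.sum_sub_distrib, Finset.mul_sum, Finset.mul_sum]
        exact Finset.sum_congr rfl fun a _ => by simp only [g]; ring
      rw [hrec, hsum]
      have := mul_le_mul_of_nonneg_left hineq (hWpos t ω i).le
      rw [← hc] at this
      linarith
    have := integral_mono_ae (hΦint (t + 1) ht) ((hΦint t ht.le).add (hlin.const_mul c)) hpt
    refine this.trans (le_of_eq ?_)
    simp only [Pi.add_apply]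
    rw [integral_add (hΦint t ht.le) (hlin.const_mul c), integral_const_mul, hzero]
    ring
  set N : ℝ := ((Bs.card : ℝ) + (Be.card : ℝ)) * (A : ℝ) with hN
  have hNpos : 0 < N := by
    have : (0 : ℝ) < Be.card := by exact_mod_cast hBe.card_pos
    positivity
  have hPsiE : (PsiE A).card = A := by
    unfold PsiE
    rw [Finset.card_image_of_injective, Finset.card_univ, Fintype.card_fin]
    intro a b h
    exact congrFun h a
  have hΦ0 : ∀ ω, ∑ i ∈ ℐ, W 0 ω i = N * (A : ℝ) ^ A := by
    intro ω
    have hd : Disjoint (Bs ×ˢ (Finset.univ : Finset (Fin A → Fin A))) (Be ×ˢ PsiE A) :=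
      Finset.disjoint_product.2 (Or.inl hdisj)
    rw [hℐ, Finset.sum_union hd]
    have h1 : ∀ i ∈ Bs ×ˢ (Finset.univ : Finset (Fin A → Fin A)), W 0 ω i = (A : ℝ) := by
      intro i hi
      have : i.1 ∉ Be := Finset.disjoint_left.1 hdisj (Finset.mem_product.1 hi).1
      simp [hW, this]
    have h2 : ∀ i ∈ Be ×ˢ PsiE A, W 0 ω i = (A : ℝ) ^ A := by
      intro i hi
      have : i.1 ∈ Be := (Finset.mem_product.1 hi).1
      simp [hW, this]
    rw [Finset.sum_congr rfl h1, Finset.sum_congr rfl h2]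
    simp only [Finset.sum_const, Finset.card_product, hPsiE, Finset.card_univ, Fintype.card_fun,
      Fintype.card_fin, nsmul_eq_mul, hN]
    push_cast
    ring
  have hΦT : ∫ ω, ∑ i ∈ ℐ, W T ω i ∂μ ≤ N * (A : ℝ) ^ A := by
    have : ∀ t ≤ T, ∫ ω, ∑ i ∈ ℐ, W t ω i ∂μ ≤ N * (A : ℝ) ^ A := by
      intro t
      induction t with
      | zero => intro _; simp [hΦ0]
      | succ t ih => intro h; exact (hstep t h).trans (ih (by omega))
    exact this T le_rfl
  have hp0 := hpdag.1
  have hAA : (0 : ℝ) < (A : ℝ) ^ A := by positivity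
  set ε : ℝ := N * (A : ℝ) ^ A / pdag with hε
  have hεpos : 0 < ε := by positivity
  have hmarkov : μ.real {ω | ε ≤ ∑ i ∈ ℐ, W T ω i} ≤ pdag := by
    have h := mul_meas_ge_le_integral_of_nonneg
      (Filter.Eventually.of_forall fun ω => Finset.sum_nonneg fun i _ => (hWpos T ω i).le)
      (hΦint T le_rfl) ε
    have e : ε * pdag = N * (A : ℝ) ^ A := by rw [hε]; field_simp
    exact le_of_mul_le_mul_left (h.trans (hΦT.trans e.ge)) hεpos
  have hmeas : MeasurableSet {ω | ε ≤ ∑ i ∈ ℐ, W T ω i} :=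
    measurableSet_le measurable_const (Finset.measurable_fun_sum _ fun i hi =>
      (hWmeas T le_rfl i hi).mono (𝔉.le T) le_rfl)
  have hcompl : ENNReal.ofReal (1 - pdag) ≤ μ {ω | ε ≤ ∑ i ∈ ℐ, W T ω i}ᶜ := by
    rw [← ofReal_measureReal, probReal_compl_eq_one_sub hmeas]
    exact ENNReal.ofReal_le_ofReal (by linarith)
  refine hcompl.trans (measure_mono ?_)
  intro ω hω b hb a
  have hω' : ∑ i ∈ ℐ, W T ω i < ε := not_le.1 hω
  have hbB : b ∈ Bs ∪ Be := Finset.mem_union_right _ hb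
  have hw := hwb b hbB
  have hmem : (b, Function.const (Fin A) a) ∈ ℐ := by
    rw [hℐ]
    exact Finset.mem_union_right _ (Finset.mem_product.2
      ⟨hb, Finset.mem_image_of_mem _ (Finset.mem_univ a)⟩)
  have hWlt : W T ω (b, Function.const (Fin A) a) < ε :=
    (Finset.single_le_sum (fun i _ => (hWpos T ω i).le) hmem).trans_lt hω'
  rw [hW] at hWlt
  simp only [hb, if_true] at hWlt
  set P := ∑ t ∈ Finset.Icc 1 T, M t b * ip (p t ω) (ℓt t b ω) with hP
  set Q := ∑ t ∈ Finset.Icc 1 T, M t b * ℓt t b ω a with hQ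
  have hsum : ∑ s ∈ Finset.Icc 1 T, (Real.exp (-η * Lbar) * (wb b * M s b)
        * ip (p s ω) (ℓt s b ω)
      - (wb b * M s b) * ip (pushf (Function.const (Fin A) a) (p s ω)) (ℓt s b ω))
      = wb b * (Real.exp (-η * Lbar) * P - Q) := by
    rw [hP, hQ, Finset.mul_sum, ← Finset.sum_sub_distrib, Finset.mul_sum]
    refine Finset.sum_congr rfl fun s hs => ?_
    rw [ip_pushf_const a (hpprob s hs ω).2]
    ring
  rw [hsum] at hWlt
  have hexp : Real.exp (η * (wb b * (Real.exp (-η * Lbar) * P - Q))) < N / pdag := by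
    have e : ε = (A : ℝ) ^ A * (N / pdag) := by rw [hε]; ring
    rw [e] at hWlt
    exact lt_of_mul_lt_mul_left hWlt hAA.le
  have hlog := (Real.lt_log_iff_exp_lt (by positivity)).2 hexp
  have hdiv : Real.exp (-η * Lbar) * P - Q ≤ Real.log (N / pdag) / (η * wb b) := by
    rw [le_div_iff₀ (by positivity)]
    linarith
  have hP0 : 0 ≤ P := Finset.sum_nonneg fun t ht =>
    mul_nonneg (hM t ht b hbB) (ip_nonneg (hpprob t ht ω).1 (hℓtnonneg t ht b hbB ω))
  have hexp1 : 1 - η * Lbar ≤ Real.exp (-η * Lbar) := by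
    have := Real.add_one_le_exp (-η * Lbar)
    linarith
  have hlhs : ∑ t ∈ Finset.Icc 1 T, M t b * (ip (p t ω) (ℓt t b ω) - ℓt t b ω a) = P - Q := by
    rw [hP, hQ, ← Finset.sum_sub_distrib]
    exact Finset.sum_congr rfl fun t _ => by ring
  rw [hlhs]
  nlinarith [mul_le_mul_of_nonneg_right hexp1 hP0]
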